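/- Let G_1 and G_2 be two vertex-disjoint 2-edge-colored graphs with Hamiltonian alternating cycles C_1 and C_2 respectively, and let G ∈ G_1 ⊕ G_2. If there is no good pair in G, and for each i ∈ {1,2} there is a vertex of C_i that is non-singular with respect to C_{3−i}, then G is vertex alternating-pancyclic. -/

import Mathlib

/-- An alternating cycle of length `N` in the 2-edge-colored graph `(G, c)`
(colors: `true` = red, `false` = blue). -/
def IsAltCycle {V : Type*} (G : SimpleGraph V) (c : Sym2 V → Bool) {N : ℕ}
    (x : ZMod N → V) : Prop :=
  Function.Injective x ∧ (∀ i, G.Adj (x i) (x (i + 1))) ∧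
    ∀ i, c s(x i, x (i + 1)) ≠ c s(x (i + 1), x (i + 2))

/-- There is a good pair of edges between the two vertex-disjoint alternating
cycles `x` and `y`. -/
def HasGoodPair {V : Type*} (G : SimpleGraph V) (c : Sym2 V → Bool) {N M : ℕ}
    (x : ZMod N → V) (y : ZMod M → V) : Prop :=
  ∃ (s s' : ZMod N) (t t' : ZMod M),
    (s' = s - 1 ∨ s' = s + 1) ∧ (t' = t - 1 ∨ t' = t + 1) ∧
    G.Adj (x s) (y t) ∧ G.Adj (x s') (y t') ∧
    c s(x s, x s') = c s(x s, y t) ∧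
    c s(x s', y t') = c s(x s, y t) ∧
    c s(y t', y t) = c s(x s, y t)

/-- `G` is a colored generalized sum `G ∈ G₁ ⊕ G₂` of two vertex-disjoint 2-edge-colored
graphs `G₁`, `G₂` with Hamiltonian alternating cycles `C₁ = x` (of length `2n`) and
`C₂ = y` (of length `2m`): here `G₁`, `G₂` are the induced colored subgraphs of `G` on
`V(G₁) = range x` and `V(G₂) = range y`, so the conditions are that `x` and `y` are
alternating cycles of `G` with disjoint ranges covering `V(G)` (Hamiltonicity of `Cᵢ`
in `Gᵢ`), and between any two vertices of different parts there is exactly one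
(arbitrarily colored) edge of `G`. -/
def IsCGSHam {V : Type*} (G : SimpleGraph V) (c : Sym2 V → Bool) {n m : ℕ}
    (x : ZMod (2 * n) → V) (y : ZMod (2 * m) → V) : Prop :=
  IsAltCycle G c x ∧ IsAltCycle G c y ∧
  Disjoint (Set.range x) (Set.range y) ∧
  (∀ v : V, v ∈ Set.range x ∪ Set.range y) ∧
  (∀ (i : ZMod (2 * n)) (j : ZMod (2 * m)), G.Adj (x i) (y j))

/-- The set of exterior edges of a colored generalized sum with parts `range x` and
`range y`: the edges joining the two parts. -/
def extEdges {V : Type*} {N M : ℕ} (x : ZMod N → V) (y : ZMod M → V) : Set (Sym2 V) :=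
  {e | ∃ i j, e = s(x i, y j)}

/-- The number of red exterior edges incident with `v`. -/
noncomputable def dred {V : Type*} (c : Sym2 V → Bool) {N M : ℕ}
    (x : ZMod N → V) (y : ZMod M → V) (v : V) : ℕ :=
  {e : Sym2 V | e ∈ extEdges x y ∧ v ∈ e ∧ c e = true}.ncard

/-- The number of blue exterior edges incident with `v`. -/
noncomputable def dblue {V : Type*} (c : Sym2 V → Bool) {N M : ℕ}
    (x : ZMod N → V) (y : ZMod M → V) (v : V) : ℕ :=
  {e : Sym2 V | e ∈ extEdges x y ∧ v ∈ e ∧ c e = false}.ncard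

/-- The vertex `x i` of `C₁` is singular with respect to `C₂`: the set of edges from
`x i` to `V(C₂)` (in a colored generalized sum these are all pairs `x i - y j`) is
nonempty and they all have the same color. -/
def SingularX {V : Type*} (c : Sym2 V → Bool) {N M : ℕ}
    (x : ZMod N → V) (y : ZMod M → V) (i : ZMod N) : Prop :=
  (∃ _j : ZMod M, True) ∧ ∀ j j' : ZMod M, c s(x i, y j) = c s(x i, y j')

/-- The vertex `y j` of `C₂` is singular with respect to `C₁`. -/
def SingularY {V : Type*} (c : Sym2 V → Bool) {N M : ℕ}
    (x : ZMod N → V) (y : ZMod M → V) (j : ZMod M) : Prop :=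
  (∃ _i : ZMod N, True) ∧ ∀ i i' : ZMod N, c s(x i, y j) = c s(x i', y j)

/-- A 2-edge-colored graph `(G, c)` (of even order `2N`) is vertex alternating-pancyclic:
for each vertex `v` and each `k` with `2 ≤ k` and `2k ≤ |V(G)|` (i.e. `k ∈ {2, …, N}`)
there is an alternating cycle of length `2k` in `G` passing through `v`. -/
def VertexAltPancyclic {V : Type*} [Fintype V] (G : SimpleGraph V) (c : Sym2 V → Bool) :
    Prop :=
  ∀ v : V, ∀ k : ℕ, 2 ≤ k → 2 * k ≤ Fintype.card V →
    ∃ z : ZMod (2 * k) → V, IsAltCycle G c z ∧ v ∈ Set.range z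

/-!
Unroll both cycles to bi-infinite sequences `X` and `Y` in which the parity of a position is the
color of the next edge. An exterior edge `X s — Y t` with `s + t` odd can be used by an alternating
walk that follows both cycles forwards in exactly one direction, from `X` to `Y` or from `Y` to `X`.
If there are no good pairs, then an `X`-to-`Y` edge stays one under `(s, t) ↦ (s + 1, t - 1)`, and
by periodicity the direction is a function of `s + t` alone.

Suppose that this function is not constant. Then it changes somewhere, and an arc of `X` and an
arc of `Y` whose two joining edges have opposite directions close up to an alternating cycle; the
freedom in choosing the arcs gives every length below `2 * (n + m)` and every vertex. For a
Hamiltonian cycle, an edge of `Y` is spliced into `X` where the direction changes one way and the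
rest of `Y` is inserted where it changes back.

Traversing `Y` backwards treats the edges with `s + t` even in the same way. If both functions are
constant, then the color of `X s — Y t` depends only on `s` or only on `t`, so all vertices of one
of the two cycles are singular.
-/

section MonotonePeriodic

theorem le_of_monotone_of_periodic {A β : Type*} [AddCommGroup A] [PartialOrder A]
    [IsOrderedAddMonoid A] [Archimedean A] [Preorder β] {f : A → β} {N : A}
    (hf : Monotone f) (hper : f.Periodic N) (hN : 0 < N) (i j : A) : f i ≤ f j := by
  obtain ⟨r, hr⟩ := Archimedean.arch (i - j) hN
  calc f i ≤ f (j + r • N) := hf (sub_le_iff_le_add'.1 hr)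
    _ = f j := hper.nsmul r j

theorem exists_and_not_add_one_of_periodic {P : ℤ → Prop} {N : ℤ} (hper : P.Periodic N)
    (hN : 0 < N) {i j : ℤ} (hi : P i) (hj : ¬ P j) : ∃ d, P d ∧ ¬ P (d + 1) := by
  by_contra! hstep
  exact hj (le_of_monotone_of_periodic (monotone_int_of_le_succ hstep) hper hN i j hi)

end MonotonePeriodic

section Arcs

variable {α β : Type*} {R : α → α → Prop} {U W : ℤ → α}

/-- The stretch `U a, U (a + 1), …, U (a + p)` of a bi-infinite sequence, with `p + 1` terms, so
that it is never empty. -/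
def arc (U : ℤ → α) (a : ℤ) (p : ℕ) : List α :=
  (List.range (p + 1)).map fun i : ℕ => U (a + i)

@[simp]
theorem length_arc (a : ℤ) (p : ℕ) : (arc U a p).length = p + 1 := by
  simp [arc]

@[simp]
theorem head?_arc (a : ℤ) (p : ℕ) : (arc U a p).head? = some (U a) := by
  simp [arc, List.head?_range]

@[simp]
theorem getLast?_arc (a : ℤ) (p : ℕ) : (arc U a p).getLast? = some (U (a + p)) := by
  simp [arc, List.getLast?_range]

theorem mem_arc_self (a : ℤ) (p : ℕ) : U a ∈ arc U a p :=
  List.mem_of_mem_head? (by simp)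

theorem arc_append_arc (a : ℤ) (p q : ℕ) :
    arc U a p ++ arc U (a + p + 1) q = arc U a (p + q + 1) := by
  have hlen : p + q + 1 + 1 = (p + 1) + (q + 1) := by omega
  rw [arc, arc, arc, hlen, List.range_add (n := p + 1), List.map_append, List.map_map]
  congr 1
  refine List.map_congr_left fun i _ => congrArg U ?_
  push_cast
  ring

theorem map_arc (f : α → β) (a : ℤ) (p : ℕ) : (arc U a p).map f = arc (f ∘ U) a p := by
  simp [arc, Function.comp_def]

theorem nodup_arc {N p : ℕ} (hU : ∀ a b, U a = U b → a ≡ b [ZMOD N]) (hp : p < N) (a : ℤ) :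
    (arc U a p).Nodup := by
  refine List.nodup_range.map_on fun i hi j hj hij => ?_
  rw [List.mem_range] at hi hj
  have hmod : i ≡ j [MOD N] := Int.natCast_modEq_iff.1 ((hU _ _ hij).add_left_cancel' a)
  exact hmod.eq_of_lt_of_lt (by omega) (by omega)

theorem isChain_arc (hU : ∀ a, R (U a) (U (a + 1))) (a : ℤ) (p : ℕ) :
    (arc U a p).IsChain R := by
  rw [arc, List.isChain_map, List.isChain_range_succ]
  intro i _
  simpa [add_assoc] using hU (a + i)

theorem nodup_arc_append_arc {N M p q : ℕ} (hU : ∀ a b, U a = U b → a ≡ b [ZMOD N])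
    (hW : ∀ a b, W a = W b → a ≡ b [ZMOD M]) (hUW : ∀ a b, U a ≠ W b)
    (hp : p < N) (hq : q < M) (s t : ℤ) : (arc U s p ++ arc W t q).Nodup := by
  refine (nodup_arc hU hp s).append (nodup_arc hW hq t) ?_
  simp only [List.disjoint_left, arc, List.mem_map]
  rintro _ ⟨i, -, rfl⟩ ⟨j, -, h⟩
  exact hUW _ _ h.symm

theorem isChain_arc_append_arc (hU : ∀ a, R (U a) (U (a + 1))) (hW : ∀ a, R (W a) (W (a + 1)))
    {s t : ℤ} {p q : ℕ} (hst : R (U (s + p)) (W t)) : (arc U s p ++ arc W t q).IsChain R :=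
  List.isChain_append.2 ⟨isChain_arc hU s p, isChain_arc hW t q, by simpa using hst⟩

theorem interleaved_arcs_perm (s t : ℤ) (p p' q q' : ℕ) :
    ((arc U s p ++ arc W t q) ++ (arc U (s + p + 1) p' ++ arc W (t + q + 1) q')).Perm
      (arc U s (p + p' + 1) ++ arc W t (q + q' + 1)) := by
  rw [← arc_append_arc s p p', ← arc_append_arc t q q', ← Multiset.coe_eq_coe]
  simp only [← Multiset.coe_add]
  abel

theorem cycle_chain_coe_iff {l : List α} :
    Cycle.Chain R l ↔ l.IsChain R ∧ ∀ x ∈ l.getLast?, ∀ y ∈ l.head?, R x y := by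
  cases l with
  | nil => simp
  | cons a l =>
    rw [Cycle.chain_coe_cons, ← List.cons_append, List.isChain_append]
    simp

theorem cycle_chain_getElem_val {l : List α} [NeZero l.length] (h : Cycle.Chain R l)
    (i : ZMod l.length) :
    R (l[i.val]'i.val_lt) (l[(i + 1).val]'(i + 1).val_lt) := by
  obtain ⟨hchain, hclose⟩ := cycle_chain_coe_iff.1 h
  have hi := i.val_lt
  have hsucc : (i + 1).val = (i.val + 1) % l.length := by
    rw [ZMod.val_add, ZMod.val_one_eq_one_mod, Nat.add_mod_mod]
  rcases Nat.lt_or_ge (i.val + 1) l.length with hlt | hge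
  · simp only [hsucc, Nat.mod_eq_of_lt hlt]
    exact List.isChain_iff_getElem.1 hchain _ hlt
  · have hlast : i.val + 1 = l.length := by omega
    simp only [hsucc, hlast, Nat.mod_self]
    refine hclose _ ?_ _ ?_
    · rw [List.getLast?_eq_getElem?, show l.length - 1 = i.val by omega]
      simp
    · rw [List.head?_eq_getElem?]
      simp [NeZero.pos]

end Arcs

section AltWalk

variable {V : Type*} (G : SimpleGraph V) (c : Sym2 V → Bool)

/-- The steps of an alternating walk, in which each visit `(v, b)` to a vertex `v` carries the
color `b` of the edge by which the walk leaves `v`. -/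
def AltStep (u v : V × Bool) : Prop :=
  G.Adj u.1 v.1 ∧ c s(u.1, v.1) = u.2 ∧ v.2 = !u.2

/-- The visits made by a sequence of vertices whose edge from position `a` to position `a + 1` is
red exactly for odd `a`. -/
def visit (X : ℤ → V) (a : ℤ) : V × Bool := (X a, a.bodd)

variable {G c}

theorem exists_isAltCycle_of_chain {l : List (V × Bool)} (hchain : Cycle.Chain (AltStep G c) l)
    (hnodup : (l.map Prod.fst).Nodup) {N : ℕ} [NeZero N] (hl : l.length = N) :
    ∃ z : ZMod N → V, IsAltCycle G c z ∧ ∀ u ∈ l, u.1 ∈ Set.range z := by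
  subst hl
  have hstep := cycle_chain_getElem_val hchain
  refine ⟨fun i => (l[i.val]'i.val_lt).1, ⟨fun i j hij => ?_, fun i => (hstep i).1, fun i => ?_⟩,
    fun u hu => ?_⟩
  · apply ZMod.val_injective
    apply (hnodup.getElem_inj_iff (hi := by simpa using i.val_lt) (hj := by simpa using j.val_lt)).1
    simpa using hij
  · obtain ⟨-, hcolor, hflip⟩ := hstep i
    obtain ⟨-, hcolor', -⟩ := hstep (i + 1)
    rw [add_assoc, one_add_one_eq_two] at hcolor'
    simp [hcolor, hcolor', hflip]
  · obtain ⟨i, hi, rfl⟩ := List.getElem_of_mem hu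
    exact ⟨(i : ZMod l.length), by simp [ZMod.val_natCast, Nat.mod_eq_of_lt hi]⟩

end AltWalk

/-- An alternating cycle of length `N`, unrolled to a bi-infinite sequence whose edge from position
`a` to position `a + 1` is red exactly for odd `a`. -/
structure IsAltSeq {V : Type*} (G : SimpleGraph V) (c : Sym2 V → Bool) (N : ℕ) (X : ℤ → V) :
    Prop where
  eq_iff : ∀ {a b}, X a = X b ↔ a ≡ b [ZMOD N]
  adj : ∀ a, G.Adj (X a) (X (a + 1))
  color : ∀ a, c s(X a, X (a + 1)) = a.bodd

theorem eq_xor_bodd_of_add_one {f : ℤ → Bool} (hf : ∀ a, f (a + 1) = !f a) (a : ℤ) :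
    f a = (a.bodd ^^ f 0) := by
  induction a using Int.induction_on with
  | zero => simp
  | succ i ih => simp [hf, ih]
  | pred i ih =>
    have h := hf (-i - 1)
    rw [sub_add_cancel, ih] at h
    rw [← Bool.not_not (f (-i - 1)), ← h]
    simp [sub_eq_add_neg]

/-- The bi-infinite sequence running around a closed one, started at position `ε`. -/
def unroll {V : Type*} {N : ℕ} (x : ZMod N → V) (ε a : ℤ) : V := x ((a + ε : ℤ) : ZMod N)

theorem exists_unroll_eq {V : Type*} {N : ℕ} (x : ZMod N → V) (ε : ℤ) (i : ZMod N) :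
    ∃ a, unroll x ε a = x i := by
  obtain ⟨b, rfl⟩ := ZMod.intCast_surjective i
  exact ⟨b - ε, by rw [unroll, sub_add_cancel]⟩

theorem unroll_add_one {V : Type*} {N : ℕ} (x : ZMod N → V) (ε a : ℤ) :
    unroll x ε (a + 1) = x (((a + ε : ℤ) : ZMod N) + 1) := by
  rw [unroll, add_right_comm, Int.cast_add, Int.cast_one]

theorem IsAltCycle.exists_isAltSeq {V : Type*} {G : SimpleGraph V} {c : Sym2 V → Bool} {N : ℕ}
    {x : ZMod N → V} (hx : IsAltCycle G c x) : ∃ ε : ℤ, IsAltSeq G c N (unroll x ε) := by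
  obtain ⟨hinj, hadj, halt⟩ := hx
  set f : ℤ → Bool := fun a => c s(x (a : ZMod N), x ((a : ZMod N) + 1)) with hf
  have hflip (a : ℤ) : f (a + 1) = !f a := by
    have h := halt (a : ZMod N)
    rw [← one_add_one_eq_two, ← add_assoc] at h
    simpa [hf, Bool.eq_not] using h.symm
  obtain ⟨ε, hε⟩ : ∃ ε : ℤ, ε.bodd = f 0 := by
    cases f 0
    exacts [⟨0, rfl⟩, ⟨1, rfl⟩]
  refine ⟨ε, fun {a b} => ?_, fun a => ?_, fun a => ?_⟩
  · rw [unroll, unroll, hinj.eq_iff, ZMod.intCast_eq_intCast_iff]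
    exact ⟨Int.ModEq.add_right_cancel' ε, Int.ModEq.add_right ε⟩
  · rw [unroll_add_one]
    exact hadj _
  · rw [unroll_add_one]
    exact (eq_xor_bodd_of_add_one hflip (a + ε)).trans (by simp [← hε])

namespace IsAltSeq

variable {V : Type*} {G : SimpleGraph V} {c : Sym2 V → Bool} {N : ℕ} {X : ℤ → V}

theorem periodic (hX : IsAltSeq G c N X) : X.Periodic N := fun _ =>
  hX.eq_iff.2 Int.add_modEq_right

theorem visit_periodic (hX : IsAltSeq G c N X) : (visit X).Periodic N := fun a => by
  have hbodd : (a + N).bodd = a.bodd := by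
    rw [← hX.color, ← hX.color, add_right_comm, hX.periodic, hX.periodic]
  exact Prod.ext (hX.periodic a) hbodd

theorem altStep (hX : IsAltSeq G c N X) (a : ℤ) :
    AltStep G c (visit X a) (visit X (a + 1)) :=
  ⟨hX.adj a, hX.color a, by simp [visit]⟩

theorem two_le {n : ℕ} [NeZero n] (hX : IsAltSeq G c (2 * n) X) : 2 ≤ n := by
  by_contra! hlt
  have hn := NeZero.pos n
  obtain rfl : n = 1 := by omega
  have hback : X (1 + 1) = X 0 := hX.periodic 0
  have h0 := hX.color 0
  have h1 := hX.color 1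
  rw [hback, Sym2.eq_swap] at h1
  simp [h1] at h0

theorem reverse (hX : IsAltSeq G c N X) : IsAltSeq G c N fun a => X (1 - a) where
  eq_iff {a b} := by
    rw [hX.eq_iff]
    exact ⟨fun h => by simpa using (Int.ModEq.refl 1).sub h, (Int.ModEq.refl 1).sub⟩
  adj a := by
    have h := (hX.adj (1 - (a + 1))).symm
    rwa [show 1 - (a + 1) + 1 = 1 - a by ring] at h
  color a := by
    have h := hX.color (1 - (a + 1))
    rw [Sym2.eq_swap, show 1 - (a + 1) + 1 = 1 - a by ring] at h
    simpa [sub_eq_add_neg] using h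

end IsAltSeq

/-- The values of `s + t` at the two edges `X s — Y t` that join arcs with `p + 1` and `q + 1`
vertices differ by `q - p`, which has to be `2` up to periods `2 * n` and `2 * m`. -/
theorem exists_arc_lengths {n m k : ℕ} (hn : 2 ≤ n) (hm : 2 ≤ m) (hk : 2 ≤ k) (hkn : k < n + m) :
    ∃ p q : ℕ, p + q + 2 = 2 * k ∧ p < 2 * n ∧ q < 2 * m ∧
      ∃ i j : ℤ, (q : ℤ) = p + 2 * (1 + i * n + j * m) := by
  by_cases hmax : n < k ∧ m < k
  · exact ⟨k + n - m - 2, k + m - n, by omega, by omega, by omega, -1, 1, by omega⟩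
  rcases le_total m n with hmn | hnm
  · have hlt := Nat.mod_lt k (show 0 < m by omega)
    have hle := Nat.mod_le k m
    have hdiv := Nat.mod_add_div' k m
    refine ⟨2 * k - 2 - k % m, k % m, by omega, by omega, by omega, 0, -(k / m : ℕ), ?_⟩
    have hdiv : ((k % m : ℕ) + (k / m : ℕ) * m : ℤ) = k := mod_cast hdiv
    rw [Nat.cast_sub (by omega), Nat.cast_sub (by omega)]
    push_cast at hdiv ⊢
    linarith
  · have hlt := Nat.mod_lt (k - 2) (show 0 < n by omega)
    have hle := Nat.mod_le (k - 2) n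
    have hdiv := Nat.mod_add_div' (k - 2) n
    refine ⟨(k - 2) % n, 2 * k - 2 - (k - 2) % n, by omega, by omega, by omega,
      ((k - 2) / n : ℕ), 0, ?_⟩
    have hdiv : (((k - 2) % n : ℕ) + ((k - 2) / n : ℕ) * n : ℤ) = (k - 2 : ℕ) := mod_cast hdiv
    rw [Nat.cast_sub hk] at hdiv
    rw [Nat.cast_sub (by omega), Nat.cast_sub (by omega)]
    push_cast at hdiv ⊢
    linarith

/-- Two disjoint unrolled alternating cycles that cover the graph, all of whose exterior edges are
present. The absence of good pairs is recorded only for steps `s ↦ s + 1` on the first cycle, as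
interchanging the two edges of a good pair reverses the steps on both cycles. -/
structure IsUnrolledSum {V : Type*} (G : SimpleGraph V) (c : Sym2 V → Bool) (n m : ℕ)
    (X Y : ℤ → V) : Prop where
  left : IsAltSeq G c (2 * n) X
  right : IsAltSeq G c (2 * m) Y
  ne : ∀ a b, X a ≠ Y b
  cover : ∀ v, v ∈ Set.range X ∪ Set.range Y
  adj : ∀ a b, G.Adj (X a) (Y b)
  not_goodPair : ∀ {s t t'}, (t' = t - 1 ∨ t' = t + 1) → c s(X s, Y t) = s.bodd →
    c s(Y t', Y t) = s.bodd → c s(X (s + 1), Y t') ≠ s.bodd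

/-- Whether the exterior edges `X s — Y t` with `s + t = 2 * j + 1` lead from `X` to `Y` in walks
that follow both cycles forwards; otherwise they lead from `Y` to `X`. Without good pairs this does
not depend on the edge, so it is read off at `s = 0`. -/
def Crosses {V : Type*} (G : SimpleGraph V) (c : Sym2 V → Bool) (X Y : ℤ → V) (j : ℤ) : Prop :=
  AltStep G c (visit X 0) (visit Y (2 * j + 1))

theorem bodd_eq_not_of_add_eq {s t j : ℤ} (h : s + t = 2 * j + 1) : t.bodd = !s.bodd := by
  have h' := congrArg Int.bodd h
  simp only [Int.bodd_add, Int.bodd_mul, Int.bodd_two, Int.bodd_one] at h'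
  revert h'
  cases s.bodd <;> simp

namespace IsUnrolledSum

variable {V : Type*} {G : SimpleGraph V} {c : Sym2 V → Bool} {n m : ℕ} {X Y : ℤ → V}

theorem reverse (H : IsUnrolledSum G c n m X Y) :
    IsUnrolledSum G c n m X fun t => Y (1 - t) where
  left := H.left
  right := H.right.reverse
  ne a _ := H.ne a _
  cover v := (H.cover v).imp_right fun ⟨b, hb⟩ => ⟨1 - b, by simpa using hb⟩
  adj a _ := H.adj a _
  not_goodPair ht := H.not_goodPair (by omega)

theorem altStep_iff_color (H : IsUnrolledSum G c n m X Y) {s t j : ℤ} (h : s + t = 2 * j + 1) :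
    AltStep G c (visit X s) (visit Y t) ↔ c s(X s, Y t) = s.bodd := by
  simp [AltStep, visit, H.adj, bodd_eq_not_of_add_eq h]

theorem altStep_symm_iff (H : IsUnrolledSum G c n m X Y) {s t j : ℤ} (h : s + t = 2 * j + 1) :
    AltStep G c (visit Y t) (visit X s) ↔ ¬ AltStep G c (visit X s) (visit Y t) := by
  rw [H.altStep_iff_color h]
  simp [AltStep, visit, (H.adj s t).symm, bodd_eq_not_of_add_eq h, Sym2.eq_swap (a := Y t),
    Bool.eq_not]

theorem altStep_antidiagonal (H : IsUnrolledSum G c n m X Y) {s t j : ℤ} (h : s + t = 2 * j + 1)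
    (hst : AltStep G c (visit X s) (visit Y t)) :
    AltStep G c (visit X (s + 1)) (visit Y (t - 1)) := by
  rw [H.altStep_iff_color h] at hst
  rw [H.altStep_iff_color (j := j) (by omega)]
  have hback : c s(Y (t - 1), Y t) = s.bodd := by
    calc c s(Y (t - 1), Y t) = (t - 1).bodd := by simpa using H.right.color (t - 1)
      _ = s.bodd := by simp [sub_eq_add_neg, bodd_eq_not_of_add_eq h]
  simpa [Bool.eq_not] using H.not_goodPair (Or.inl rfl) hst hback

theorem crosses_periodic_right (H : IsUnrolledSum G c n m X Y) :
    (Crosses G c X Y).Periodic m := fun j => by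
  rw [Crosses, Crosses, ← H.right.visit_periodic (2 * j + 1)]
  congr 2
  push_cast
  ring

variable [NeZero n] [NeZero m]

theorem altStep_iff_crosses (H : IsUnrolledSum G c n m X Y) {s t j : ℤ} (h : s + t = 2 * j + 1) :
    AltStep G c (visit X s) (visit Y t) ↔ Crosses G c X Y j := by
  set f : ℤ → Prop := fun i => AltStep G c (visit X i) (visit Y (2 * j + 1 - i)) with hf
  have hmono : Monotone f := monotone_int_of_le_succ fun i hi => by
    simpa [hf, sub_add_eq_sub_sub] using H.altStep_antidiagonal (j := j) (by ring) hi
  have hper : f.Periodic ((2 * n : ℕ) * (2 * m : ℕ)) := fun i => by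
    have hX := H.left.visit_periodic.nat_mul (2 * m) i
    have hY := H.right.visit_periodic.sub_nat_mul_eq (x := 2 * j + 1 - i) (2 * n)
    rw [mul_comm] at hX
    simp only [hf, ← sub_sub, hX, hY]
  have hpos : (0 : ℤ) < (2 * n : ℕ) * (2 * m : ℕ) := by
    have := NeZero.pos n
    have := NeZero.pos m
    positivity
  have hconst := (le_of_monotone_of_periodic hmono hper hpos s 0).antisymm
    (le_of_monotone_of_periodic hmono hper hpos 0 s)
  simpa [hf, ← h, Crosses] using hconst

theorem altStep_iff_not_crosses (H : IsUnrolledSum G c n m X Y) {s t j : ℤ}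
    (h : s + t = 2 * j + 1) :
    AltStep G c (visit Y t) (visit X s) ↔ ¬ Crosses G c X Y j := by
  rw [H.altStep_symm_iff h, H.altStep_iff_crosses h]

theorem crosses_periodic_left (H : IsUnrolledSum G c n m X Y) :
    (Crosses G c X Y).Periodic n := fun j => propext <| by
  rw [← H.altStep_iff_crosses (s := 0 + (2 * n : ℕ)) (t := 2 * j + 1) (by push_cast; ring),
    H.left.visit_periodic, Crosses]

theorem crosses_add_combination (H : IsUnrolledSum G c n m X Y) (d i j : ℤ) :
    Crosses G c X Y (d + i * n + j * m) ↔ Crosses G c X Y d := by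
  have hn := H.crosses_periodic_left.int_mul i d
  have hm := H.crosses_periodic_right.int_mul j (d + i * n)
  simp only [Int.cast_eq] at hn hm
  rw [hm, hn]

theorem exists_isAltCycle_of_two_arcs (H : IsUnrolledSum G c n m X Y) {k p q : ℕ}
    (hk : p + q + 2 = 2 * k) (hp : p < 2 * n) (hq : q < 2 * m) {s t d e : ℤ}
    (hd : s + p + t = 2 * d + 1) (he : s + (t + q) = 2 * e + 1)
    (hcross : Crosses G c X Y d) (hback : ¬ Crosses G c X Y e) :
    ∃ z : ZMod (2 * k) → V, IsAltCycle G c z ∧ X s ∈ Set.range z ∧ Y t ∈ Set.range z := by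
  have : NeZero k := ⟨by omega⟩
  have hchain : Cycle.Chain (AltStep G c) (arc (visit X) s p ++ arc (visit Y) t q) := by
    refine cycle_chain_coe_iff.2 ⟨isChain_arc_append_arc H.left.altStep H.right.altStep
      ((H.altStep_iff_crosses hd).2 hcross), ?_⟩
    simpa using (H.altStep_iff_not_crosses he).2 hback
  have hnodup : ((arc (visit X) s p ++ arc (visit Y) t q).map Prod.fst).Nodup := by
    rw [List.map_append, map_arc, map_arc]
    exact nodup_arc_append_arc (fun _ _ => H.left.eq_iff.1) (fun _ _ => H.right.eq_iff.1) H.ne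
      hp hq s t
  obtain ⟨z, hz, hmem⟩ := exists_isAltCycle_of_chain hchain hnodup (N := 2 * k) (by simp; omega)
  exact ⟨z, hz, hmem (visit X s) (List.mem_append_left _ (mem_arc_self s p)),
    hmem (visit Y t) (List.mem_append_right _ (mem_arc_self t q))⟩

theorem exists_isAltCycle_of_lt (H : IsUnrolledSum G c n m X Y) {k : ℕ} (hk : 2 ≤ k)
    (hkn : k < n + m) {d : ℤ} (hd : Crosses G c X Y d) (hd' : ¬ Crosses G c X Y (d + 1)) (v : V) :
    ∃ z : ZMod (2 * k) → V, IsAltCycle G c z ∧ v ∈ Set.range z := by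
  obtain ⟨p, q, hpq, hp, hq, i, j, hij⟩ :=
    exists_arc_lengths H.left.two_le H.right.two_le hk hkn
  have hcycle (s t : ℤ) (hst : s + p + t = 2 * d + 1) :=
    H.exists_isAltCycle_of_two_arcs hpq hp hq hst (e := d + 1 + i * n + j * m) (by linarith) hd
      (by rwa [H.crosses_add_combination])
  rcases H.cover v with ⟨s, rfl⟩ | ⟨t, rfl⟩
  · obtain ⟨z, hz, hs, -⟩ := hcycle s (2 * d + 1 - p - s) (by ring)
    exact ⟨z, hz, hs⟩
  · obtain ⟨z, hz, -, ht⟩ := hcycle (2 * d + 1 - p - t) t (by ring)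
    exact ⟨z, hz, ht⟩

theorem exists_hamiltonian_isAltCycle_of_gap (H : IsUnrolledSum G c n m X Y) {p p' q : ℕ}
    (hn : p + p' + 2 = n) (hm : q + 2 = m) {e : ℤ} (he : ¬ Crosses G c X Y e)
    (he' : Crosses G c X Y (e + 1)) (hd : Crosses G c X Y (e + p + 1))
    (hd' : ¬ Crosses G c X Y (e + p + 2)) :
    ∃ z : ZMod (2 * (n + m)) → V, IsAltCycle G c z := by
  -- The edge from `Y t` to `Y (t + 1)` is spliced into `X`, and the rest of `Y` closes the cycle.
  set s : ℤ := 0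
  set t : ℤ := 2 * e + 2
  set l := (arc (visit X) s (2 * p + 1) ++ arc (visit Y) t 1) ++
    (arc (visit X) (s + (2 * p + 1 : ℕ) + 1) (2 * p' + 1) ++
      arc (visit Y) (t + (1 : ℕ) + 1) (2 * q + 1)) with hl
  have hchain : Cycle.Chain (AltStep G c) l := by
    have hen : Crosses G c X Y (e + 1 + n) := by rwa [H.crosses_periodic_left]
    have hem : ¬ Crosses G c X Y (e + m) := by rwa [H.crosses_periodic_right]
    refine cycle_chain_coe_iff.2 ⟨List.isChain_append.2 ⟨isChain_arc_append_arc H.left.altStep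
      H.right.altStep ((H.altStep_iff_crosses ?_).2 hd), isChain_arc_append_arc H.left.altStep
      H.right.altStep ((H.altStep_iff_crosses ?_).2 hen), ?_⟩, ?_⟩
    · push_cast
      linarith
    · rw [← hn]
      push_cast
      linarith
    · simpa using (H.altStep_iff_not_crosses (by linarith)).2 hd'
    · simpa [hl] using (H.altStep_iff_not_crosses (by push_cast [← hm]; linarith)).2 hem
  have hnodup : (l.map Prod.fst).Nodup := by
    rw [((interleaved_arcs_perm s t _ _ _ _).map Prod.fst).nodup_iff, List.map_append, map_arc,
      map_arc]
    exact nodup_arc_append_arc (fun _ _ => H.left.eq_iff.1) (fun _ _ => H.right.eq_iff.1) H.ne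
      (by omega) (by omega) s t
  obtain ⟨z, hz, -⟩ := exists_isAltCycle_of_chain hchain hnodup (N := 2 * (n + m))
    (by simp [hl]; omega)
  exact ⟨z, hz⟩

theorem exists_hamiltonian_isAltCycle (H : IsUnrolledSum G c n m X Y) {d e : ℤ}
    (hd : Crosses G c X Y d) (hd' : ¬ Crosses G c X Y (d + 1)) (he : ¬ Crosses G c X Y e)
    (he' : Crosses G c X Y (e + 1)) : ∃ z : ZMod (2 * (n + m)) → V, IsAltCycle G c z := by
  have hn : (0 : ℤ) < n := mod_cast NeZero.pos n
  obtain ⟨r, hr⟩ := Int.eq_ofNat_of_zero_le (Int.emod_nonneg (d - e) hn.ne')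
  have hrn := Int.emod_lt_of_pos (d - e) hn
  have hed : e + r = d + -((d - e) / n) * n := by
    linarith [Int.emod_add_mul_ediv (d - e) n]
  have hcross (i : ℤ) : Crosses G c X Y (e + r + i) ↔ Crosses G c X Y (d + i) := by
    rw [hed, add_right_comm]
    simpa using H.crosses_add_combination (d + i) (-((d - e) / n)) 0
  have hr0 : r ≠ 0 := by
    rintro rfl
    exact he (by simpa [hd] using hcross 0)
  obtain ⟨p, rfl⟩ := Nat.exists_eq_succ_of_ne_zero hr0
  obtain ⟨p', hp'⟩ : ∃ p', p + p' + 2 = n := ⟨n - p - 2, by omega⟩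
  obtain ⟨q, hq⟩ := Nat.exists_eq_add_of_le' H.right.two_le
  refine H.exists_hamiltonian_isAltCycle_of_gap hp' hq.symm he he' ?_ ?_
  · simpa [hd, add_assoc] using hcross 0
  · simpa [add_assoc, one_add_one_eq_two] using (hcross 1).not.2 hd'

theorem color_eq_or_exists_crosses (H : IsUnrolledSum G c n m X Y) :
    (∃ b : Bool, ∀ s t, Odd (s + t) → c s(X s, Y t) = (s.bodd ^^ b)) ∨
      ∃ i j, Crosses G c X Y i ∧ ¬ Crosses G c X Y j := by
  by_contra! hcon
  obtain ⟨hcolor, hconst⟩ := hcon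
  by_cases h0 : Crosses G c X Y 0
  · obtain ⟨s, t, ⟨j, hj⟩, hst⟩ := hcolor false
    rw [Bool.xor_false, ne_eq, ← H.altStep_iff_color hj, H.altStep_iff_crosses hj] at hst
    exact hst (hconst 0 j h0)
  · obtain ⟨s, t, ⟨j, hj⟩, hst⟩ := hcolor true
    rw [Bool.xor_true, ne_eq, Bool.eq_not, not_not, ← H.altStep_iff_color hj,
      H.altStep_iff_crosses hj] at hst
    exact h0 (hconst j 0 hst)

theorem vertexAltPancyclic_of_crosses [Fintype V] (H : IsUnrolledSum G c n m X Y)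
    (hcard : Fintype.card V = 2 * (n + m)) {i j : ℤ} (hi : Crosses G c X Y i)
    (hj : ¬ Crosses G c X Y j) : VertexAltPancyclic G c := by
  have hper := H.crosses_periodic_left
  have hn : (0 : ℤ) < n := mod_cast NeZero.pos n
  obtain ⟨d, hd, hd'⟩ := exists_and_not_add_one_of_periodic hper hn hi hj
  obtain ⟨e, he, he'⟩ := exists_and_not_add_one_of_periodic (hper.comp Not) hn hj (not_not.2 hi)
  intro v k hk hkn
  rw [hcard] at hkn
  rcases (show k ≤ n + m by omega).lt_or_eq with hlt | rfl
  · exact H.exists_isAltCycle_of_lt hk hlt hd hd' v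
  · obtain ⟨z, hz⟩ := H.exists_hamiltonian_isAltCycle hd hd' he (not_not.1 he')
    have hbij : z.Bijective := by
      rw [Fintype.bijective_iff_injective_and_card, ZMod.card, hcard]
      exact ⟨hz.1, rfl⟩
    exact ⟨z, hz, hbij.surjective v⟩

theorem vertexAltPancyclic_or_color_const [Fintype V] (H : IsUnrolledSum G c n m X Y)
    (hcard : Fintype.card V = 2 * (n + m)) :
    VertexAltPancyclic G c ∨ (∀ s t t', c s(X s, Y t) = c s(X s, Y t')) ∨
      ∀ s s' t, c s(X s, Y t) = c s(X s', Y t) := by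
  rcases H.color_eq_or_exists_crosses with ⟨b, hodd⟩ | ⟨i, j, hi, hj⟩
  swap
  · exact Or.inl (H.vertexAltPancyclic_of_crosses hcard hi hj)
  rcases H.reverse.color_eq_or_exists_crosses with ⟨b', hrev⟩ | ⟨i, j, hi, hj⟩
  swap
  · exact Or.inl (H.reverse.vertexAltPancyclic_of_crosses hcard hi hj)
  have heven (s t : ℤ) (hst : Even (s + t)) : c s(X s, Y t) = (s.bodd ^^ b') := by
    simpa using hrev s (1 - t) (by grind)
  right
  rcases eq_or_ne b' b with rfl | hne
  · have hcolor (s t : ℤ) : c s(X s, Y t) = (s.bodd ^^ b') :=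
      (Int.even_or_odd (s + t)).elim (heven s t) (hodd s t)
    exact Or.inl fun s t t' => by rw [hcolor, hcolor]
  · have hcolor (s t : ℤ) : c s(X s, Y t) = (t.bodd ^^ b') := by
      rcases Int.even_or_odd (s + t) with ⟨j, hj⟩ | ⟨j, hj⟩
      · have hbodd := bodd_eq_not_of_add_eq (s := s) (t := t + 1) (j := j) (by omega)
        rw [heven s t ⟨j, hj⟩, show t.bodd = s.bodd by simpa using hbodd]
      · rw [hodd s t ⟨j, hj⟩, bodd_eq_not_of_add_eq hj, Bool.eq_not.2 hne]
        simp
    exact Or.inr fun s s' t => by rw [hcolor, hcolor]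

end IsUnrolledSum

namespace IsCGSHam

variable {V : Type*} {G : SimpleGraph V} {c : Sym2 V → Bool} {n m : ℕ}
  {x : ZMod (2 * n) → V} {y : ZMod (2 * m) → V}

theorem exists_isUnrolledSum (hG : IsCGSHam G c x y) (hgp : ¬ HasGoodPair G c x y) :
    ∃ ε δ : ℤ, IsUnrolledSum G c n m (unroll x ε) (unroll y δ) := by
  obtain ⟨hx, hy, hdisj, hcover, hadj⟩ := hG
  obtain ⟨ε, hX⟩ := hx.exists_isAltSeq
  obtain ⟨δ, hY⟩ := hy.exists_isAltSeq
  refine ⟨ε, δ, hX, hY, fun a b => hdisj.ne_of_mem ⟨_, rfl⟩ ⟨_, rfl⟩, fun v => ?_,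
    fun a b => hadj _ _, fun {s t t'} ht hst hback hst' => hgp ?_⟩
  · refine (hcover v).imp ?_ ?_ <;> rintro ⟨i, rfl⟩
    exacts [exists_unroll_eq x ε i, exists_unroll_eq y δ i]
  · refine ⟨(s + ε : ℤ), (s + 1 + ε : ℤ), (t + δ : ℤ), (t' + δ : ℤ), Or.inr ?_, ht.imp ?_ ?_,
      hadj _ _, hadj _ _, (hX.color s).trans hst.symm, hst'.trans hst.symm, hback.trans hst.symm⟩
    · push_cast
      ring
    all_goals
      rintro rfl
      push_cast
      ring

theorem card_eq [Fintype V] [NeZero n] [NeZero m] (hG : IsCGSHam G c x y) :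
    Fintype.card V = 2 * (n + m) := by
  obtain ⟨hx, hy, hdisj, hcover, -⟩ := hG
  have hbij : (Sum.elim x y).Bijective :=
    ⟨hx.1.sumElim hy.1 fun i j => hdisj.ne_of_mem ⟨i, rfl⟩ ⟨j, rfl⟩, fun v => by
      simpa using hcover v⟩
  rw [← Fintype.card_of_bijective hbij, Fintype.card_sum, ZMod.card, ZMod.card, mul_add]

end IsCGSHam

/-- Let `G ∈ G₁ ⊕ G₂` where `G₁`, `G₂` are vertex-disjoint
2-edge-colored graphs with Hamiltonian alternating cycles `C₁ = x`, `C₂ = y`. If `G` has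
no good pair and each `Cᵢ` has a vertex that is non-singular with respect to `C_{3-i}`,
then `G` is vertex alternating-pancyclic. -/
theorem cgs_two_vertex_alt_pancyclic {V : Type*} [Fintype V]
    (G : SimpleGraph V) (c : Sym2 V → Bool)
    {n m : ℕ} (hn : 0 < n) (hm : 0 < m)
    (x : ZMod (2 * n) → V) (y : ZMod (2 * m) → V)
    (hG : IsCGSHam G c x y) (hgp : ¬ HasGoodPair G c x y)
    (hns1 : ∃ i, ¬ SingularX c x y i) (hns2 : ∃ j, ¬ SingularY c x y j) :
    VertexAltPancyclic G c := by
  have : NeZero n := ⟨hn.ne'⟩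
  have : NeZero m := ⟨hm.ne'⟩
  obtain ⟨ε, δ, H⟩ := hG.exists_isUnrolledSum hgp
  rcases H.vertexAltPancyclic_or_color_const hG.card_eq with hpan | hX | hY
  · exact hpan
  · obtain ⟨i, hi⟩ := hns1
    refine absurd ⟨⟨0, trivial⟩, fun j j' => ?_⟩ hi
    obtain ⟨s, hs⟩ := exists_unroll_eq x ε i
    obtain ⟨t, ht⟩ := exists_unroll_eq y δ j
    obtain ⟨t', ht'⟩ := exists_unroll_eq y δ j'
    rw [← hs, ← ht, ← ht', hX]
  · obtain ⟨j, hj⟩ := hns2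
    refine absurd ⟨⟨0, trivial⟩, fun i i' => ?_⟩ hj
    obtain ⟨t, ht⟩ := exists_unroll_eq y δ j
    obtain ⟨s, hs⟩ := exists_unroll_eq x ε i
    obtain ⟨s', hs'⟩ := exists_unroll_eq x ε i'
    rw [← hs, ← hs', ← ht, hY]
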